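/- Suppose ξ = 2πp/q, where p and q are coprime positive integers with 0 < p/q < 1/2. Fix δ ∈ ℝ, an integer ℓ ≥ 0 and an integer k with 0 ≤ k < q, and set N_m = mq + k + 1 for m ≥ 1. Then for every choice, for each N, of a unit eigenvector u_N of H(δ)H(δ)ᵀ corresponding to its largest eigenvalue, r_{N_m − 1 − ℓ}(N_m) → δ·G(a,ξ)·(C₁(ℓ)·cos(2πkp/q + φ) + C₂(ℓ)·sin(2πkp/q + φ)) as m → ∞. -/

import Mathlib

open Filter Matrix

/-- Hankelization (diagonal averaging): the `j`-th value is the average of the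
entries `Y i k` with `i + k = j`. -/
noncomputable def hankelize {L K : ℕ} (Y : Matrix (Fin L) (Fin K) ℝ) (j : ℕ) : ℝ :=
  (∑ i : Fin L, ∑ k : Fin K, if (i : ℕ) + (k : ℕ) = j then Y i k else 0) /
  (∑ i : Fin L, ∑ k : Fin K, if (i : ℕ) + (k : ℕ) = j then (1 : ℝ) else 0)

/-- The `L × K` Hankel (trajectory) matrix of a series `x`. -/
noncomputable def hankelOf (x : ℕ → ℝ) (L K : ℕ) : Matrix (Fin L) (Fin K) ℝ :=
  Matrix.of fun i k => x ((i : ℕ) + (k : ℕ))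

/-- Squared Euclidean norm of a vector. -/
noncomputable def normSq {M : ℕ} (w : Fin M → ℝ) : ℝ := ∑ i, w i ^ 2

/-- `u` is a unit eigenvector of `A` corresponding to its largest eigenvalue. -/
def IsTopEigenvector {L : ℕ} (A : Matrix (Fin L) (Fin L) ℝ) (u : Fin L → ℝ) : Prop :=
  normSq u = 1 ∧ ∃ μ : ℝ, A.mulVec u = μ • u ∧
    ∀ (ν : ℝ) (v : Fin L → ℝ), v ≠ 0 → A.mulVec v = ν • v → ν ≤ μ

/-- The exponential signal `x_n = a^n`. -/
noncomputable def expSignal (a : ℝ) : ℕ → ℝ := fun n => a ^ n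

/-- The harmonic noise `e_n = cos (ξ n + φ)`. -/
noncomputable def cosNoise (ξ φ : ℝ) : ℕ → ℝ := fun n => Real.cos (ξ * (n : ℝ) + φ)

/-- The vector `W_M = (1, a, …, a^{M-1})ᵀ`. -/
noncomputable def Wvec (a : ℝ) (M : ℕ) : Fin M → ℝ := fun i => a ^ (i : ℕ)

/-- `ρ_j = (𝒮(P₀ E Hᵀ S₀ H))_j + (𝒮(P₀⊥ E))_j`. -/
noncomputable def rho (a ξ φ : ℝ) (L K : ℕ) (j : ℕ) : ℝ :=
  let H := hankelOf (expSignal a) L K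
  let E := hankelOf (cosNoise ξ φ) L K
  let P0perp : Matrix (Fin L) (Fin L) ℝ :=
    (normSq (Wvec a L))⁻¹ • Matrix.vecMulVec (Wvec a L) (Wvec a L)
  let P0 : Matrix (Fin L) (Fin L) ℝ := 1 - P0perp
  let S0 : Matrix (Fin L) (Fin L) ℝ :=
    ((normSq (Wvec a L)) ^ 2 * normSq (Wvec a K))⁻¹ • Matrix.vecMulVec (Wvec a L) (Wvec a L)
  hankelize (P0 * E * Hᵀ * S0 * H) j + hankelize (P0perp * E) j

/-- The matrix `H(δ)H(δ)ᵀ` for the perturbed series `a^n + δ cos(ξ n + φ)`. -/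
noncomputable def HdeltaSq (a ξ φ δ : ℝ) (L K : ℕ) : Matrix (Fin L) (Fin L) ℝ :=
  let Hδ := hankelOf (expSignal a) L K + δ • hankelOf (cosNoise ξ φ) L K
  Hδ * Hδᵀ

/-- The SSA reconstruction error `r_j = (𝒮(u uᵀ H(δ)))_j - a^j`. -/
noncomputable def recErr (a ξ φ δ : ℝ) (L K : ℕ) (u : Fin L → ℝ) (j : ℕ) : ℝ :=
  hankelize (Matrix.vecMulVec u u *
    (hankelOf (expSignal a) L K + δ • hankelOf (cosNoise ξ φ) L K)) j - a ^ j

/-- `G(a,ξ) = (a²-1)/(a(a²+1-2a cos ξ))`. -/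
noncomputable def Gfun (a ξ : ℝ) : ℝ := (a ^ 2 - 1) / (a * (a ^ 2 + 1 - 2 * a * Real.cos ξ))

/-- The coefficient `C₁(ℓ)`. -/
noncomputable def C1 (a ξ : ℝ) (ℓ : ℕ) : ℝ :=
  (2 / (1 + (ℓ : ℝ))) * (a * Real.cos ((ℓ : ℝ) * ξ) - a ^ (-(ℓ : ℤ)) * Real.cos ξ)
  - (a ^ 2 + 1 - 2 * a * Real.cos ξ - 2 * Real.sin ξ ^ 2) * Gfun a ξ * a ^ (-(ℓ : ℤ))

/-- The coefficient `C₂(ℓ)`. -/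
noncomputable def C2 (a ξ : ℝ) (ℓ : ℕ) : ℝ :=
  (2 / (1 + (ℓ : ℝ))) * (a * Real.sin ((ℓ : ℝ) * ξ) + a ^ (-(ℓ : ℤ)) * Real.sin ξ)
  - 2 * Real.sin ξ * (a - Real.cos ξ) * Gfun a ξ * a ^ (-(ℓ : ℤ))

/-- `D(ℓ) = G(a,ξ)·√(C₁(ℓ)² + C₂(ℓ)²)`. -/
noncomputable def Dfun (a ξ : ℝ) (ℓ : ℕ) : ℝ :=
  Gfun a ξ * Real.sqrt (C1 a ξ ℓ ^ 2 + C2 a ξ ℓ ^ 2)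


theorem nsq_dot {M : ℕ} (x : Fin M → ℝ) : normSq x = x ⬝ᵥ x := by
  simp [normSq, dotProduct, sq]

theorem nsq_nonneg {M : ℕ} (x : Fin M → ℝ) : 0 ≤ normSq x :=
  Finset.sum_nonneg fun i _ => sq_nonneg _

theorem nsq_add {M : ℕ} (x y : Fin M → ℝ) :
    normSq (x + y) = normSq x + 2 * (x ⬝ᵥ y) + normSq y := by
  simp only [nsq_dot, add_dotProduct, dotProduct_add, dotProduct_comm y x]; ring

theorem nsq_smul {M : ℕ} (c : ℝ) (x : Fin M → ℝ) : normSq (c • x) = c ^ 2 * normSq x := by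
  simp only [nsq_dot, smul_dotProduct, dotProduct_smul, smul_eq_mul]; ring

theorem cs {M : ℕ} (x y : Fin M → ℝ) : (x ⬝ᵥ y) ^ 2 ≤ normSq x * normSq y :=
  Finset.sum_mul_sq_le_sq_mul_sq _ _ _

theorem cs_abs {M : ℕ} (x y : Fin M → ℝ) {r s : ℝ} (hr : 0 ≤ r) (hs : 0 ≤ s)
    (hx : normSq x ≤ r ^ 2) (hy : normSq y ≤ s ^ 2) : |x ⬝ᵥ y| ≤ r * s := by
  apply abs_le_of_sq_le_sq _ (by positivity)
  calc (x ⬝ᵥ y) ^ 2 ≤ _ := cs x y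
    _ ≤ r ^ 2 * s ^ 2 := mul_le_mul hx hy (nsq_nonneg _) (by positivity)
    _ = _ := by ring

theorem ent_abs {M : ℕ} (x : Fin M → ℝ) {r : ℝ} (hr : 0 ≤ r)
    (hx : normSq x ≤ r ^ 2) (i : Fin M) : |x i| ≤ r := by
  apply abs_le_of_sq_le_sq _ hr
  exact (Finset.single_le_sum (f := fun i => x i ^ 2) (fun _ _ => sq_nonneg _) (Finset.mem_univ i)).trans hx

/-- Frobenius bound. -/
theorem nsq_mulVec {L K : ℕ} (F : Matrix (Fin L) (Fin K) ℝ) (x : Fin K → ℝ) {e r : ℝ}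
    (hF : ∑ i, ∑ j, F i j ^ 2 ≤ e ^ 2) (hx : normSq x ≤ r ^ 2) :
    normSq (F *ᵥ x) ≤ (e * r) ^ 2 := by
  calc normSq (F *ᵥ x) ≤ ∑ i, (∑ j, F i j ^ 2) * normSq x :=
        Finset.sum_le_sum fun i _ => cs (fun j => F i j) x
    _ = (∑ i, ∑ j, F i j ^ 2) * normSq x := by rw [Finset.sum_mul]
    _ ≤ e ^ 2 * r ^ 2 := mul_le_mul hF hx (nsq_nonneg _) (by positivity)
    _ = _ := by ring

theorem top_rayleigh {L K : ℕ} (A : Matrix (Fin L) (Fin K) ℝ) (μ : ℝ)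
    (h : ∀ (ν : ℝ) (v : Fin L → ℝ), v ≠ 0 → (A * Aᵀ).mulVec v = ν • v → ν ≤ μ)
    (x : Fin L → ℝ) : normSq (Aᵀ *ᵥ x) ≤ μ * normSq x := by
  have hH : (A * Aᵀ).IsHermitian := by
    rw [IsHermitian, conjTranspose_eq_transpose_of_trivial, transpose_mul, transpose_transpose]
  set B : Matrix (Fin L) (Fin L) ℝ := μ • 1 - A * Aᵀ with hB
  have hBH : B.IsHermitian := by
    refine IsHermitian.sub ?_ hH
    rw [IsHermitian, conjTranspose_smul, conjTranspose_one]; simp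
  have hps : B.PosSemidef := by
    rw [hBH.posSemidef_iff_eigenvalues_nonneg]
    intro i
    have h1 := hBH.mulVec_eigenvectorBasis i
    have h2 := h (μ - hBH.eigenvalues i) (hBH.eigenvectorBasis i) (by
      intro h0
      have := hBH.eigenvectorBasis.orthonormal.ne_zero i
      apply this
      ext j
      simpa using congrFun h0 j) (by
      have h3 : ∀ y, B *ᵥ y = μ • y - (A * Aᵀ) *ᵥ y := by
        intro y; rw [hB, sub_mulVec, smul_mulVec, one_mulVec]
      rw [sub_smul, ← h1, h3]; simp)
    simp only [Pi.zero_apply]; linarith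
  have := hps.dotProduct_mulVec_nonneg x
  rw [hB, sub_mulVec, smul_mulVec, one_mulVec, dotProduct_sub, ← mulVec_mulVec,
    dotProduct_smul, dotProduct_mulVec, ← mulVec_transpose] at this
  simp only [star_trivial, smul_eq_mul, ← nsq_dot] at this
  linarith

theorem pert {L K : ℕ} (A F : Matrix (Fin L) (Fin K) ℝ) (w : Fin L → ℝ) (z : Fin K → ℝ)
    (u : Fin L → ℝ) (T e : ℝ) (he : 0 ≤ e) (hT : 2 * e < T)
    (hA : A = T • vecMulVec w z + F) (hw : normSq w = 1) (hz : normSq z = 1)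
    (hF : ∑ i, ∑ j, F i j ^ 2 ≤ e ^ 2)
    (hu : IsTopEigenvector (A * Aᵀ) u) :
    ∃ c p μ d : ℝ, ∃ g : Fin L → ℝ, ∃ k : Fin K → ℝ,
      T ^ 2 - 2 * T * e ≤ μ ∧ μ ≤ (T + e) ^ 2 ∧
      (∀ i, u i = p * w i + T * c / μ * (F *ᵥ z) i + g i) ∧
      (∀ j, (Aᵀ *ᵥ u) j = T * c * z j + p * (Fᵀ *ᵥ w) j + k j) ∧
      (∀ i, |g i| ≤ e ^ 2 / μ) ∧ (∀ j, |k j| ≤ T * e ^ 2 / μ + e ^ 3 / μ) ∧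
      |c| ≤ 1 ∧ |c ^ 2 - 1| ≤ e ^ 2 / μ ∧
      c = p + T * c / μ * (w ⬝ᵥ (F *ᵥ z)) + d ∧ |d| ≤ e ^ 2 / μ := by
  obtain ⟨hu1, μ, hμ, hmax⟩ := hu
  have hFt : ∑ i, ∑ j, Fᵀ i j ^ 2 ≤ e ^ 2 := by
    rw [Finset.sum_comm]; exact hF
  have hT0 : 0 < T := by linarith
  have hw1 : normSq w ≤ 1 ^ 2 := by rw [hw]; norm_num
  have hz1 : normSq z ≤ 1 ^ 2 := by rw [hz]; norm_num
  have hu2 : normSq u ≤ 1 ^ 2 := by rw [hu1]; norm_num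
  have hAt : ∀ x, Aᵀ *ᵥ x = (T * (w ⬝ᵥ x)) • z + Fᵀ *ᵥ x := by
    intro x
    rw [hA, transpose_add, transpose_smul, add_mulVec, smul_mulVec]
    congr 1
    ext j
    simp [mulVec, dotProduct, vecMulVec_apply, Finset.mul_sum, Finset.sum_mul]
    refine Finset.sum_congr rfl fun i _ => by ring
  have hAx : ∀ x, A *ᵥ x = (T * (z ⬝ᵥ x)) • w + F *ᵥ x := by
    intro x
    rw [hA, add_mulVec, smul_mulVec]
    congr 1
    ext j
    simp [mulVec, dotProduct, vecMulVec_apply, Finset.mul_sum, Finset.sum_mul]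
    refine Finset.sum_congr rfl fun i _ => by ring
  set c := w ⬝ᵥ u with hc
  have hc1 : |c| ≤ 1 := by simpa using cs_abs w u zero_le_one zero_le_one hw1 hu2
  set v := Aᵀ *ᵥ u with hv
  have hv' : v = (T * c) • z + Fᵀ *ᵥ u := hAt u
  have hAv : A *ᵥ v = μ • u := by rw [← hμ, hv, mulVec_mulVec]
  have hvμ : normSq v = μ := by
    have : u ⬝ᵥ (A *ᵥ v) = v ⬝ᵥ v := by
      rw [dotProduct_mulVec, ← mulVec_transpose]
    rw [nsq_dot, ← this, hAv, dotProduct_smul, ← nsq_dot, hu1]; simp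
  have hlow : T ^ 2 - 2 * T * e ≤ μ := by
    have h1 := top_rayleigh A μ hmax w
    rw [hw, hAt, ← nsq_dot, hw, nsq_add, nsq_smul, hz, smul_dotProduct, smul_eq_mul] at h1
    have h2 := cs_abs z (Fᵀ *ᵥ w) zero_le_one (by positivity) hz1 (nsq_mulVec Fᵀ w hFt hw1)
    have h3 := nsq_nonneg (Fᵀ *ᵥ w)
    have := (abs_le.1 h2).1
    nlinarith
  have hμ0 : 0 < μ := by nlinarith
  have hup : μ ≤ (T + e) ^ 2 := by
    have h2 := cs_abs z (Fᵀ *ᵥ u) zero_le_one (by positivity) hz1 (nsq_mulVec Fᵀ u hFt hu2)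
    have h3 := nsq_mulVec Fᵀ u hFt hu2
    rw [← hvμ, hv', nsq_add, nsq_smul, hz, smul_dotProduct, smul_eq_mul]
    have h4 : T * c * (z ⬝ᵥ Fᵀ *ᵥ u) ≤ T * (1 * (1 * (e * 1))) := by
      rw [mul_assoc]
      refine mul_le_mul_of_nonneg_left ?_ hT0.le
      refine (le_abs_self _).trans ?_
      rw [abs_mul]
      exact mul_le_mul hc1 h2 (abs_nonneg _) zero_le_one
    have h5 : (T * c) ^ 2 ≤ T ^ 2 := by
      rw [mul_pow]
      have : c ^ 2 ≤ 1 := by rw [← sq_abs]; exact pow_le_one₀ (abs_nonneg _) hc1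
      nlinarith [sq_nonneg T]
    nlinarith
  set β := z ⬝ᵥ v with hβ
  set p := T * β / μ with hp
  have hue : u = p • w + μ⁻¹ • (F *ᵥ v) := by
    have : u = μ⁻¹ • (μ • u) := by rw [smul_smul, inv_mul_cancel₀ hμ0.ne', one_smul]
    rw [this, ← hAv, hAx, smul_add, smul_smul, hp]
    congr 2; rw [← hβ]; field_simp
  set g := μ⁻¹ • (F *ᵥ (Fᵀ *ᵥ u)) with hg
  have hh : μ⁻¹ • (F *ᵥ v) = (T * c / μ) • (F *ᵥ z) + g := by
    rw [hv', mulVec_add, mulVec_smul, smul_add, smul_smul, hg]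
    congr 2; field_simp
  have hue2 : u = p • w + ((T * c / μ) • (F *ᵥ z) + g) := by rw [← hh]; exact hue
  have hgn : normSq g ≤ (e ^ 2 / μ) ^ 2 := by
    rw [hg, nsq_smul]
    have := nsq_mulVec F _ hF (nsq_mulVec Fᵀ u hFt hu2)
    calc _ ≤ (μ⁻¹) ^ 2 * (e * (e * 1)) ^ 2 := by gcongr
      _ = _ := by field_simp
  have he2 : 0 ≤ e ^ 2 / μ := by positivity
  refine ⟨c, p, μ, w ⬝ᵥ g, g, (T * c / μ) • (Fᵀ *ᵥ (F *ᵥ z)) + Fᵀ *ᵥ g, hlow, hup, ?_, ?_, ?_, ?_, hc1, ?_, ?_, ?_⟩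
  · intro i
    have := congrFun hue2 i
    simp only [Pi.add_apply, Pi.smul_apply, smul_eq_mul] at this
    linarith
  · intro j
    have : v = (T * c) • z + (p • (Fᵀ *ᵥ w) + ((T * c / μ) • (Fᵀ *ᵥ (F *ᵥ z)) + Fᵀ *ᵥ g)) := by
      rw [hv', ← mulVec_smul, ← mulVec_smul, ← mulVec_add, ← mulVec_add, ← hue2]
    have := congrFun this j
    simp only [Pi.add_apply, Pi.smul_apply, smul_eq_mul] at this ⊢
    linarith
  · exact fun i => ent_abs g he2 hgn i
  · intro j
    have h1 := ent_abs _ (by positivity) (nsq_mulVec Fᵀ g hFt hgn) j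
    have h2 := ent_abs _ (by positivity) (nsq_mulVec Fᵀ _ hFt (nsq_mulVec F z hF hz1)) j
    simp only [Pi.add_apply, Pi.smul_apply, smul_eq_mul]
    refine (abs_add_le _ _).trans (add_le_add ?_ ?_)
    · rw [abs_mul, abs_div, abs_mul, abs_of_pos hT0, abs_of_pos hμ0]
      calc T * |c| / μ * _ ≤ T * 1 / μ * (e * (e * 1)) := by gcongr
        _ = _ := by ring
    · calc _ ≤ _ := h1
        _ = _ := by ring
  · set h := μ⁻¹ • (F *ᵥ v) with hhd
    have hhn : normSq h ≤ e ^ 2 / μ := by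
      have hs : normSq v ≤ (Real.sqrt μ) ^ 2 := by rw [hvμ, Real.sq_sqrt hμ0.le]
      rw [hhd, nsq_smul]
      calc _ ≤ (μ⁻¹) ^ 2 * (e * Real.sqrt μ) ^ 2 := by gcongr; exact nsq_mulVec F v hF hs
        _ = _ := by rw [mul_pow, Real.sq_sqrt hμ0.le]; field_simp
    have hch : c = p + w ⬝ᵥ h := by
      rw [hc]
      conv_lhs => rw [hue]
      rw [dotProduct_add, dotProduct_smul, ← nsq_dot, hw]; simp
    have h1 : (1:ℝ) = p ^ 2 + 2 * p * (w ⬝ᵥ h) + normSq h := by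
      rw [← hu1]
      conv_lhs => rw [hue]
      rw [nsq_add, nsq_smul, hw, smul_dotProduct, smul_eq_mul]; ring
    have h2 := cs w h
    rw [hw, one_mul] at h2
    have h3 : c ^ 2 - 1 = (w ⬝ᵥ h) ^ 2 - normSq h := by rw [hch]; linarith
    rw [h3, abs_le]; constructor <;> linarith [sq_nonneg (w ⬝ᵥ h)]
  · have : c = w ⬝ᵥ (p • w + ((T * c / μ) • (F *ᵥ z) + g)) := by rw [← hue2]
    rw [dotProduct_add, dotProduct_add, dotProduct_smul, dotProduct_smul, ← nsq_dot, hw] at this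
    simp only [smul_eq_mul] at this
    linarith
  · simpa using cs_abs w g zero_le_one he2 hw1 hgn

theorem bd_zero {c f : ℕ → ℝ} (hc : ∀ᶠ m in atTop, |c m| ≤ 1) (hf : Tendsto f atTop (nhds 0)) :
    Tendsto (fun m => c m * f m) atTop (nhds 0) := by
  refine squeeze_zero_norm' ?_ (tendsto_zero_iff_norm_tendsto_zero.1 hf)
  filter_upwards [hc] with m hm
  rw [norm_mul]
  exact mul_le_of_le_one_left (norm_nonneg _) hm

theorem abs_tend_zero {f g : ℕ → ℝ} (hc : ∀ᶠ m in atTop, |f m| ≤ g m) (hf : Tendsto g atTop (nhds 0)) :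
    Tendsto f atTop (nhds 0) :=
  squeeze_zero_norm' (by simpa using hc) hf

theorem scal (T e c p μ d U V w z x y g k κ : ℕ → ℝ) (w0 z0 x0 y0 κ0 : ℝ)
    (hT : Tendsto T atTop atTop) (he : ∀ m, 1 ≤ e m)
    (heT : Tendsto (fun m => e m ^ 2 / T m) atTop (nhds 0))
    (hμ1 : ∀ᶠ m in atTop, T m ^ 2 - 2 * T m * e m ≤ μ m)
    (hμ2 : ∀ᶠ m in atTop, μ m ≤ (T m + e m) ^ 2)
    (hU : ∀ᶠ m in atTop, U m = p m * w m + T m * c m / μ m * y m + g m)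
    (hV : ∀ᶠ m in atTop, V m = T m * c m * z m + p m * x m + k m)
    (hg : ∀ᶠ m in atTop, |g m| ≤ e m ^ 2 / μ m)
    (hk : ∀ᶠ m in atTop, |k m| ≤ T m * e m ^ 2 / μ m + e m ^ 3 / μ m)
    (hc : ∀ᶠ m in atTop, |c m| ≤ 1) (hc2 : ∀ᶠ m in atTop, |c m ^ 2 - 1| ≤ e m ^ 2 / μ m)
    (hcp : ∀ᶠ m in atTop, c m = p m + T m * c m / μ m * κ m + d m)
    (hd : ∀ᶠ m in atTop, |d m| ≤ e m ^ 2 / μ m)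
    (hw : Tendsto w atTop (nhds w0)) (hz : Tendsto z atTop (nhds z0))
    (hx : Tendsto x atTop (nhds x0)) (hy : Tendsto y atTop (nhds y0))
    (hκ : Tendsto κ atTop (nhds κ0)) :
    Tendsto (fun m => U m * V m - T m * w m * z m) atTop
      (nhds (w0 * x0 + y0 * z0 - κ0 * w0 * z0)) := by
  have hT0 : ∀ᶠ m in atTop, 0 < T m := hT.eventually_gt_atTop 0
  have heT1 : Tendsto (fun m => e m / T m) atTop (nhds 0) := by
    refine squeeze_zero' ?_ ?_ heT
    · filter_upwards [hT0] with m hm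
      have := he m
      positivity
    · filter_upwards [hT0] with m hm
      have := he m
      gcongr
      nlinarith
  -- μ/T^2 → 1
  have hμT : Tendsto (fun m => μ m / T m ^ 2) atTop (nhds 1) := by
    have h1 : Tendsto (fun m => 1 - 2 * (e m / T m)) atTop (nhds 1) := by
      simpa using (heT1.const_mul 2).const_sub 1
    have h2 : Tendsto (fun m => (1 + e m / T m) ^ 2) atTop (nhds 1) := by
      simpa using (heT1.const_add 1).pow 2
    refine tendsto_of_tendsto_of_tendsto_of_le_of_le' h1 h2 ?_ ?_
    · filter_upwards [hT0, hμ1] with m hm h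
      rw [le_div_iff₀ (by positivity)]
      calc _ = _ := by field_simp
        _ ≤ _ := h
    · filter_upwards [hT0, hμ2] with m hm h
      rw [div_le_iff₀ (by positivity)]
      calc _ ≤ _ := h
        _ = _ := by field_simp
  have hτ : Tendsto (fun m => T m ^ 2 / μ m) atTop (nhds 1) := by
    simpa using hμT.inv₀ one_ne_zero
  have hμ0 : ∀ᶠ m in atTop, 0 < μ m := by
    filter_upwards [hμT.eventually (lt_mem_nhds zero_lt_one), hT0] with m h1 h2
    by_contra h
    have : μ m / T m ^ 2 ≤ 0 := div_nonpos_of_nonpos_of_nonneg (not_lt.1 h) (by positivity)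
    linarith
  have hTi : Tendsto (fun m => (T m)⁻¹) atTop (nhds 0) := tendsto_inv_atTop_zero.comp hT
  have hTμ : Tendsto (fun m => T m / μ m) atTop (nhds 0) := by
    have := hτ.mul hTi
    rw [mul_zero] at this
    refine this.congr' ?_
    filter_upwards [hT0, hμ0] with m h1 h2
    field_simp
  have hTe : Tendsto (fun m => T m * (e m ^ 2 / μ m)) atTop (nhds 0) := by
    have := hτ.mul heT
    rw [mul_zero] at this
    refine this.congr' ?_
    filter_upwards [hT0, hμ0] with m h1 h2
    field_simp
  have he2 : Tendsto (fun m => e m ^ 2 / μ m) atTop (nhds 0) := by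
    have := hTi.mul hTe
    rw [mul_zero] at this
    refine this.congr' ?_
    filter_upwards [hT0, hμ0] with m h1 h2
    field_simp
  have he3 : Tendsto (fun m => e m ^ 3 / μ m) atTop (nhds 0) := by
    have := heT1.mul hTe
    rw [mul_zero] at this
    refine this.congr' ?_
    filter_upwards [hT0, hμ0] with m h1 h2
    field_simp
  have hmulT : ∀ f : ℕ → ℝ, (∀ᶠ m in atTop, |f m| ≤ e m ^ 2 / μ m) →
      Tendsto (fun m => T m * f m) atTop (nhds 0) := by
    intro f hf
    refine abs_tend_zero ?_ hTe
    filter_upwards [hf, hT0] with m h1 h2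
    rw [abs_mul, abs_of_pos h2]
    gcongr
  have hTg := hmulT g hg
  have hTd := hmulT d hd
  have hTc := hmulT _ hc2
  have hg0 := abs_tend_zero hg he2
  have hd0 := abs_tend_zero hd he2
  have hc0 : Tendsto (fun m => c m ^ 2) atTop (nhds 1) := by
    have := (abs_tend_zero hc2 he2).add_const 1
    simpa using this
  have hk0 : Tendsto k atTop (nhds 0) := by
    refine abs_tend_zero hk ?_
    have := hTe.add he3
    simpa [mul_div_assoc] using this
  -- q = c - p
  have hq0 : Tendsto (fun m => c m - p m) atTop (nhds 0) := by
    have h1 : Tendsto (fun m => T m / μ m * κ m) atTop (nhds 0) := by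
      simpa using hTμ.mul hκ
    have := (bd_zero hc h1).add hd0
    rw [add_zero] at this
    refine this.congr' ?_
    filter_upwards [hcp] with m h
    linear_combination -h
  have hp0 : ∀ f : ℕ → ℝ, Tendsto f atTop (nhds 0) →
      Tendsto (fun m => p m * f m) atTop (nhds 0) := by
    intro f hf
    have := (bd_zero hc hf).sub (hq0.mul hf)
    rw [mul_zero, sub_zero] at this
    refine this.congr fun m => by ring
  have hp2 : Tendsto (fun m => p m ^ 2) atTop (nhds 1) := by
    have := (hc0.sub ((bd_zero hc hq0).const_mul 2)).add (hq0.pow 2)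
    norm_num at this
    refine this.congr fun m => by ring
  have hTpc : Tendsto (fun m => T m * p m * c m - T m) atTop (nhds (-κ0)) := by
    have := (hTc.sub ((hτ.mul hc0).mul hκ)).sub (bd_zero hc hTd)
    norm_num at this
    refine this.congr' ?_
    filter_upwards [hcp] with m h
    linear_combination (T m * c m) * h
  have hA : Tendsto (fun m => p m * (x m * 0 + k m * w m)) atTop (nhds 0) := by
    apply hp0; simpa using hk0.mul hw
  have hB : Tendsto (fun m => c m * (T m / μ m * y m * k m)) atTop (nhds 0) := by
    apply bd_zero hc; simpa using (hTμ.mul hy).mul hk0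
  have hC : Tendsto (fun m => c m * (p m * (T m / μ m * y m * x m))) atTop (nhds 0) := by
    apply bd_zero hc; apply hp0; simpa using (hTμ.mul hy).mul hx
  have hD : Tendsto (fun m => c m * (T m * g m * z m)) atTop (nhds 0) := by
    apply bd_zero hc; simpa using hTg.mul hz
  have hE : Tendsto (fun m => p m * (g m * x m)) atTop (nhds 0) := by
    apply hp0; simpa using hg0.mul hx
  have hF : Tendsto (fun m => g m * k m) atTop (nhds 0) := by
    simpa using hg0.mul hk0
  have := (((hTpc.mul hw).mul hz).add ((hp2.mul hw).mul hx)).add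
    (((hτ.mul hc0).mul hy).mul hz) |>.add (((hA.add hB).add hC).add ((hD.add hE).add hF))
  have e1 : (-κ0 * w0 * z0 + 1 * w0 * x0 + 1 * 1 * y0 * z0 + (0 + 0 + 0 + (0 + 0 + 0)))
    = w0 * x0 + y0 * z0 - κ0 * w0 * z0 := by ring
  rw [e1] at this
  refine this.congr' ?_
  filter_upwards [hU, hV] with m h1 h2
  rw [h1, h2]
  ring

/-- Entries counted from the end. -/
noncomputable def bk {M : ℕ} (v : Fin M → ℝ) (s : ℕ) : ℝ :=
  if h : s < M then v (Fin.rev ⟨s, h⟩) else 0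

theorem bk_of_lt {M : ℕ} (v : Fin M → ℝ) {s : ℕ} (h : s < M) : bk v s = v (Fin.rev ⟨s, h⟩) := by
  simp [bk, h]

theorem sum_rev {M : ℕ} (f : Fin M → ℝ) : ∑ i, f i = ∑ i, f (Fin.rev i) :=
  (Equiv.sum_comp Fin.revPerm f).symm

theorem hank_sum {L K j l : ℕ} (Y : Matrix (Fin L) (Fin K) ℝ) (G : ℕ → ℕ → ℝ)
    (hG : ∀ s t, Y (Fin.rev s) (Fin.rev t) = G s t) (hL : l < L) (hK : l < K)
    (hj : j + l + 2 = L + K) :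
    (∑ i : Fin L, ∑ k : Fin K, if (i : ℕ) + (k : ℕ) = j then Y i k else 0) =
      ∑ st ∈ Finset.HasAntidiagonal.antidiagonal l, G st.1 st.2 := by
  have h1 : (∑ i : Fin L, ∑ k : Fin K, if (i : ℕ) + (k : ℕ) = j then Y i k else 0)
      = ∑ i : Fin L, ∑ k : Fin K, if (i : ℕ) + (k : ℕ) = l then G i k else 0 := by
    rw [sum_rev]
    refine Finset.sum_congr rfl fun s _ => ?_
    rw [sum_rev]
    refine Finset.sum_congr rfl fun t _ => ?_
    rw [hG]
    have h2 : ((Fin.rev s : Fin L) : ℕ) + ((Fin.rev t : Fin K) : ℕ) = j ↔ (s : ℕ) + (t : ℕ) = l := by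
      rw [Fin.val_rev, Fin.val_rev]
      have := s.2
      have := t.2
      omega
    simp only [h2]
  rw [h1]
  rw [Fin.sum_univ_eq_sum_range (fun i => ∑ k : Fin K, if i + (k : ℕ) = l then G i k else 0) L]
  have h3 : ∀ i, (∑ k : Fin K, if i + (k : ℕ) = l then G i k else 0) =
      ∑ k ∈ Finset.range K, if i + k = l then G i k else 0 := fun i =>
    Fin.sum_univ_eq_sum_range (fun k => if i + k = l then G i k else 0) K
  simp only [h3]
  rw [← Finset.sum_product' (f := fun i k => if i + k = l then G i k else 0), ← Finset.sum_filter]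
  refine Finset.sum_congr ?_ fun _ _ => rfl
  ext ⟨s, t⟩
  simp only [Finset.mem_filter, Finset.mem_product, Finset.mem_range, Finset.HasAntidiagonal.mem_antidiagonal]
  omega

theorem hank_eq {L K j l : ℕ} (u : Fin L → ℝ) (v : Fin K → ℝ) (hL : l < L) (hK : l < K)
    (hj : j + l + 2 = L + K) :
    hankelize (vecMulVec u v) j =
      (∑ st ∈ Finset.HasAntidiagonal.antidiagonal l, bk u st.1 * bk v st.2) / (l + 1) := by
  unfold hankelize
  rw [hank_sum (vecMulVec u v) (fun s t => bk u s * bk v t) ?_ hL hK hj,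
    hank_sum (fun _ _ => (1:ℝ)) (fun _ _ => 1) ?_ hL hK hj]
  · simp
  · intro s t; rfl
  · intro s t
    rw [bk_of_lt u s.2, bk_of_lt v t.2]
    rfl

/-- geometric partial sum of squares -/
noncomputable def S2 (a : ℝ) (M : ℕ) : ℝ := ∑ s ∈ Finset.range M, (a⁻¹ ^ 2) ^ s

theorem S2_pos {a : ℝ} {M : ℕ} (hM : 0 < M) : 1 ≤ S2 a M := by
  have := Finset.single_le_sum (f := fun s => (a⁻¹ ^ 2) ^ s) (s := Finset.range M)
    (fun i _ => by positivity) (Finset.mem_range.2 hM)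
  simpa [S2] using this

theorem pow_rev {a : ℝ} (ha : 1 < a) {M : ℕ} (s : Fin M) :
    a ^ ((Fin.rev s : Fin M) : ℕ) = a ^ (M - 1) * a⁻¹ ^ (s : ℕ) := by
  have h : M - 1 = ((Fin.rev s : Fin M) : ℕ) + s := by
    rw [Fin.val_rev]; have := s.2; omega
  have h0 : a ≠ 0 := by positivity
  rw [h, pow_add, mul_assoc, ← mul_pow, mul_inv_cancel₀ h0, one_pow, mul_one]

theorem nW {a : ℝ} (ha : 1 < a) (M : ℕ) :
    normSq (Wvec a M) = (a ^ (M - 1)) ^ 2 * S2 a M := by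
  unfold normSq Wvec
  rw [sum_rev, S2, ← Fin.sum_univ_eq_sum_range (fun s => (a⁻¹ ^ 2) ^ s), Finset.mul_sum]
  refine Finset.sum_congr rfl fun s _ => ?_
  rw [pow_rev ha, mul_pow, ← pow_mul a⁻¹ 2, ← pow_mul a⁻¹, mul_comm 2]

/-- normalisation -/
noncomputable def nrm (a : ℝ) (M : ℕ) : ℝ := a ^ (M - 1) * √(S2 a M)

noncomputable def ww (a : ℝ) (M : ℕ) : Fin M → ℝ := (nrm a M)⁻¹ • Wvec a M

theorem nrm_pos {a : ℝ} (ha : 1 < a) {M : ℕ} (hM : 0 < M) : 0 < nrm a M := by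
  have := S2_pos (a := a) hM
  unfold nrm
  positivity

theorem nrm_ge {a : ℝ} (ha : 1 < a) {M : ℕ} (hM : 0 < M) : a ^ (M - 1) ≤ nrm a M := by
  have := S2_pos (a := a) hM
  unfold nrm
  refine le_mul_of_one_le_right (by positivity) (Real.one_le_sqrt.2 this)

theorem nsq_ww {a : ℝ} (ha : 1 < a) {M : ℕ} (hM : 0 < M) : normSq (ww a M) = 1 := by
  have h1 := S2_pos (a := a) hM
  have h2 := nrm_pos ha hM
  rw [ww, nsq_smul, nW ha]
  have : nrm a M ^ 2 = (a ^ (M - 1)) ^ 2 * S2 a M := by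
    rw [nrm, mul_pow, Real.sq_sqrt (by linarith)]
  rw [← this]; field_simp

theorem ww_rev {a : ℝ} (ha : 1 < a) {M : ℕ} (s : Fin M) :
    ww a M (Fin.rev s) = (√(S2 a M))⁻¹ * a⁻¹ ^ (s : ℕ) := by
  have h1 := S2_pos (a := a) s.pos
  simp only [ww, Wvec, Pi.smul_apply, smul_eq_mul, nrm]
  rw [pow_rev ha]
  have : √(S2 a M) ≠ 0 := by positivity
  field_simp

theorem S2_lim {a : ℝ} (ha : 1 < a) : Tendsto (fun M => (√(S2 a M))⁻¹) atTop
    (nhds (√(1 - a⁻¹ ^ 2))) := by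
  have hb : a⁻¹ < 1 := inv_lt_one_of_one_lt₀ ha
  have hb0 : 0 < a⁻¹ := by positivity
  have hb2 : a⁻¹ ^ 2 < 1 := pow_lt_one₀ hb0.le hb two_ne_zero
  have h := (hasSum_geometric_of_lt_one (by positivity) hb2).tendsto_sum_nat
  have h1 : Tendsto (fun M => √(S2 a M)) atTop (nhds (√((1 - a⁻¹ ^ 2)⁻¹))) :=
    (Real.continuous_sqrt.tendsto _).comp h
  have h2 := h1.inv₀ (by
    have : 0 < (1 - a⁻¹ ^ 2)⁻¹ := inv_pos.2 (by linarith)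
    positivity)
  rwa [Real.sqrt_inv, inv_inv] at h2

/-- complex geometric partial sum -/
noncomputable def Z (a : ℝ) (η : ℂ) (M : ℕ) : ℂ := ∑ s ∈ Finset.range M, (((a⁻¹ : ℝ) : ℂ) * η) ^ s

theorem Z_lim {a : ℝ} (ha : 1 < a) {η : ℂ} (hη : ‖η‖ = 1) :
    Tendsto (fun M => Z a η M) atTop (nhds (1 - ((a⁻¹ : ℝ) : ℂ) * η)⁻¹) := by
  refine (hasSum_geometric_of_norm_lt_one ?_).tendsto_sum_nat
  rw [norm_mul, hη, mul_one, Complex.norm_real, Real.norm_eq_abs, abs_of_pos (by positivity)]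
  exact inv_lt_one_of_one_lt₀ ha

theorem sum_Z (a : ℝ) (η B : ℂ) (M : ℕ) (r : ℝ) :
    ∑ s : Fin M, (r * a⁻¹ ^ (s : ℕ)) * (B * η ^ (s : ℕ)).re = r * (B * Z a η M).re := by
  rw [Z, ← Fin.sum_univ_eq_sum_range (fun s => (((a⁻¹ : ℝ) : ℂ) * η) ^ s), Finset.mul_sum,
    Complex.re_sum, Finset.mul_sum]
  refine Finset.sum_congr rfl fun s _ => ?_
  have : B * (((a⁻¹ : ℝ) : ℂ) * η) ^ (s : ℕ) = ((a⁻¹ ^ (s : ℕ) : ℝ) : ℂ) * (B * η ^ (s : ℕ)) := by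
    push_cast; ring
  rw [this, Complex.re_ofReal_mul]; ring

section conc
variable {a ξ φ δ : ℝ} {L K : ℕ} {B η : ℂ}

theorem Fx (ha : 1 < a)
    (hn : ∀ x i, x + i + 2 = L + K → cosNoise ξ φ x = (B * η ^ i).re) (t : Fin K) :
    ((δ • hankelOf (cosNoise ξ φ) L K)ᵀ *ᵥ ww a L) (Fin.rev t) =
      δ * ((√(S2 a L))⁻¹ * (B * η ^ (t : ℕ) * Z a η L).re) := by
  rw [← sum_Z, Finset.mul_sum, mulVec, dotProduct, sum_rev]
  refine Finset.sum_congr rfl fun s _ => ?_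
  rw [ww_rev ha]
  simp only [transpose_apply, Matrix.smul_apply, hankelOf, of_apply, smul_eq_mul]
  rw [hn _ (t + s) (by rw [Fin.val_rev, Fin.val_rev]; have := s.2; have := t.2; omega), pow_add,
    ← mul_assoc B]
  ring

theorem Fy (ha : 1 < a)
    (hn : ∀ x i, x + i + 2 = L + K → cosNoise ξ φ x = (B * η ^ i).re) (s : Fin L) :
    ((δ • hankelOf (cosNoise ξ φ) L K) *ᵥ ww a K) (Fin.rev s) =
      δ * ((√(S2 a K))⁻¹ * (B * η ^ (s : ℕ) * Z a η K).re) := by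
  rw [← sum_Z, Finset.mul_sum, mulVec, dotProduct, sum_rev]
  refine Finset.sum_congr rfl fun t _ => ?_
  rw [ww_rev ha]
  simp only [Matrix.smul_apply, hankelOf, of_apply, smul_eq_mul]
  rw [hn _ (s + t) (by rw [Fin.val_rev, Fin.val_rev]; have := s.2; have := t.2; omega), pow_add,
    ← mul_assoc B]
  ring

theorem Fκ (ha : 1 < a)
    (hn : ∀ x i, x + i + 2 = L + K → cosNoise ξ φ x = (B * η ^ i).re) :
    ww a L ⬝ᵥ ((δ • hankelOf (cosNoise ξ φ) L K) *ᵥ ww a K) =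
      δ * ((√(S2 a L))⁻¹ * (√(S2 a K))⁻¹ * (B * Z a η K * Z a η L).re) := by
  have h := sum_Z a η (B * Z a η K) L (δ * ((√(S2 a L))⁻¹ * (√(S2 a K))⁻¹))
  rw [← mul_assoc, ← h, dotProduct, sum_rev]
  refine Finset.sum_congr rfl fun s _ => ?_
  rw [ww_rev ha, Fy ha hn, mul_right_comm B]
  ring

theorem Hdecomp (ha : 1 < a) (hL : 0 < L) (hK : 0 < K) :
    hankelOf (expSignal a) L K = (nrm a L * nrm a K) • vecMulVec (ww a L) (ww a K) := by
  have h1 := nrm_pos ha hL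
  have h2 := nrm_pos ha hK
  ext i j
  simp only [hankelOf, expSignal, of_apply, Matrix.smul_apply, vecMulVec_apply, ww, Wvec, Pi.smul_apply,
    smul_eq_mul, pow_add]
  field_simp

theorem frob (hLK : L * K ≤ (L + K - 1) ^ 2) :
    ∑ i, ∑ j, (δ • hankelOf (cosNoise ξ φ) L K) i j ^ 2 ≤
      (|δ| * ((L + K - 1 : ℕ) : ℝ) + 1) ^ 2 := by
  calc _ ≤ ∑ i : Fin L, ∑ j : Fin K, δ ^ 2 := by
        refine Finset.sum_le_sum fun i _ => Finset.sum_le_sum fun j _ => ?_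
        simp only [Matrix.smul_apply, hankelOf, of_apply, smul_eq_mul, cosNoise, mul_pow]
        exact mul_le_of_le_one_right (sq_nonneg _) (Real.cos_sq_le_one _)
    _ = ((L * K : ℕ) : ℝ) * δ ^ 2 := by simp; ring
    _ ≤ (((L + K - 1) ^ 2 : ℕ) : ℝ) * δ ^ 2 := by gcongr
    _ = (|δ| * ((L + K - 1 : ℕ) : ℝ)) ^ 2 := by rw [mul_pow, sq_abs]; push_cast; ring
    _ ≤ _ := by gcongr; linarith
end conc

theorem reB (θ ξ : ℝ) (x : ℝ) :
    (Complex.exp (θ * Complex.I) * Complex.exp ((x * ξ : ℝ) * Complex.I)).re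
      = Real.cos (θ + x * ξ) := by
  rw [← Complex.exp_add, ← add_mul, ← Complex.ofReal_add, Complex.exp_ofReal_mul_I_re]

theorem final_id (a ξ θ δ : ℝ) (ha : 1 < a) (ℓ : ℕ) :
    (∑ st ∈ Finset.HasAntidiagonal.antidiagonal ℓ,
      ((√(1 - a⁻¹ ^ 2) * a⁻¹ ^ st.1) * (δ * (√(1 - a⁻¹ ^ 2) * (Complex.exp (θ * Complex.I) *
          Complex.exp (((-ξ : ℝ) : ℂ) * Complex.I) ^ st.2 *
            (1 - ((a⁻¹ : ℝ) : ℂ) * Complex.exp (((-ξ : ℝ) : ℂ) * Complex.I))⁻¹).re)) +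
       (δ * (√(1 - a⁻¹ ^ 2) * (Complex.exp (θ * Complex.I) *
          Complex.exp (((-ξ : ℝ) : ℂ) * Complex.I) ^ st.1 *
            (1 - ((a⁻¹ : ℝ) : ℂ) * Complex.exp (((-ξ : ℝ) : ℂ) * Complex.I))⁻¹).re)) *
          (√(1 - a⁻¹ ^ 2) * a⁻¹ ^ st.2) -
       (δ * (√(1 - a⁻¹ ^ 2) * √(1 - a⁻¹ ^ 2) * (Complex.exp (θ * Complex.I) *
            (1 - ((a⁻¹ : ℝ) : ℂ) * Complex.exp (((-ξ : ℝ) : ℂ) * Complex.I))⁻¹ *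
            (1 - ((a⁻¹ : ℝ) : ℂ) * Complex.exp (((-ξ : ℝ) : ℂ) * Complex.I))⁻¹).re)) *
          (√(1 - a⁻¹ ^ 2) * a⁻¹ ^ st.1) * (√(1 - a⁻¹ ^ 2) * a⁻¹ ^ st.2))) / ((ℓ : ℝ) + 1) =
    δ * Gfun a ξ * (C1 a ξ ℓ * Real.cos θ + C2 a ξ ℓ * Real.sin θ) := by
  have hb : a⁻¹ < 1 := inv_lt_one_of_one_lt₀ ha
  have hb0 : 0 < a⁻¹ := by positivity
  have hb2 : a⁻¹ ^ 2 < 1 := pow_lt_one₀ hb0.le hb two_ne_zero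
  have ha0 : a ≠ 0 := by positivity
  have haC : (a : ℂ) ≠ 0 := by exact_mod_cast ha0
  set r := √(1 - a⁻¹ ^ 2) with hr
  have hr2 : r * r = 1 - a⁻¹ ^ 2 := Real.mul_self_sqrt (by linarith)
  set B := Complex.exp (θ * Complex.I) with hB
  set η := Complex.exp (((-ξ : ℝ) : ℂ) * Complex.I) with hη
  set ηb := Complex.exp (((1 * ξ : ℝ) : ℂ) * Complex.I) with hηb
  set Y := (1 - ((a⁻¹ : ℝ) : ℂ) * η)⁻¹ with hY
  have hηη : η * ηb = 1 := by
    rw [hη, hηb, ← Complex.exp_add]; simp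
  have hηs : η + ηb = ((2 * Real.cos ξ : ℝ) : ℂ) := by
    rw [hη, hηb]; push_cast; rw [Complex.two_cos]; rw [add_comm]; simp
  have hη0 : η ≠ 0 := Complex.exp_ne_zero _
  have hnη : ‖η‖ = 1 := Complex.norm_exp_ofReal_mul_I _
  have hD : 0 < a ^ 2 + 1 - 2 * a * Real.cos ξ := by
    nlinarith [Real.cos_le_one ξ]
  have hden : (1 - ((a⁻¹ : ℝ) : ℂ) * η) ≠ 0 := by
    intro h0
    have h1 : ((a⁻¹ : ℝ) : ℂ) * η = 1 := by linear_combination -h0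
    have h2 := congrArg norm h1
    rw [norm_mul, hnη, mul_one, Complex.norm_real, Real.norm_eq_abs, abs_of_pos hb0, norm_one] at h2
    linarith
  have hDC : ((a : ℂ) - η) * (a - ηb) = ((a ^ 2 + 1 - 2 * a * Real.cos ξ : ℝ) : ℂ) := by
    have : ((a ^ 2 + 1 - 2 * a * Real.cos ξ : ℝ) : ℂ) = (a : ℂ) ^ 2 + 1 - a * ((2 * Real.cos ξ : ℝ) : ℂ) := by
      push_cast; ring
    rw [this, ← hηs]
    linear_combination hηη
  -- (1 - b²) Y = G (a - ηb)
  have hYG : ((1 - a⁻¹ ^ 2 : ℝ) : ℂ) * Y = ((Gfun a ξ : ℝ) : ℂ) * (a - ηb) := by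
    have hGd : ((Gfun a ξ : ℝ) : ℂ) * (((a ^ 2 + 1 - 2 * a * Real.cos ξ : ℝ) : ℂ) * a) = (a : ℂ) ^ 2 - 1 := by
      have : Gfun a ξ * ((a ^ 2 + 1 - 2 * a * Real.cos ξ) * a) = a ^ 2 - 1 := by
        unfold Gfun
        have hD' := hD.ne'
        rw [div_mul_eq_mul_div, div_eq_iff (by positivity)]; ring
      exact_mod_cast this
    rw [hY, ← div_eq_mul_inv, div_eq_iff hden]
    rw [← hDC] at hGd
    push_cast
    field_simp
    linear_combination -hGd
  set S : ℂ := ∑ st ∈ Finset.HasAntidiagonal.antidiagonal ℓ, ((a⁻¹ : ℝ) : ℂ) ^ st.1 * η ^ st.2 with hS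
  have hSs : S = ∑ st ∈ Finset.HasAntidiagonal.antidiagonal ℓ, ((a⁻¹ : ℝ) : ℂ) ^ st.2 * η ^ st.1 := by
    rw [hS, ← Finset.Nat.sum_antidiagonal_swap]; rfl
  have hSg : S * (a - ηb) = a * η ^ ℓ - ((a⁻¹ : ℝ) : ℂ) ^ ℓ * ηb := by
    have h1 : S * (η - ((a⁻¹ : ℝ) : ℂ)) = η ^ (ℓ + 1) - ((a⁻¹ : ℝ) : ℂ) ^ (ℓ + 1) := by
      rw [← geom_sum₂_mul, hSs, Finset.Nat.sum_antidiagonal_eq_sum_range_succ_mk]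
      congr 1
      refine Finset.sum_congr rfl fun i _ => ?_
      rw [mul_comm]; simp
    have h2 : ((a⁻¹ : ℝ) : ℂ) * a = 1 := by push_cast; field_simp
    rw [pow_succ, pow_succ] at h1
    linear_combination (a * ηb) * h1 + (η ^ ℓ * a - S * a) * hηη + (S * ηb - ((a⁻¹ : ℝ) : ℂ) ^ ℓ * ηb) * h2
  have key : (∑ st ∈ Finset.HasAntidiagonal.antidiagonal ℓ,
      ((r * a⁻¹ ^ st.1) * (δ * (r * (B * η ^ st.2 * Y).re)) +
       (δ * (r * (B * η ^ st.1 * Y).re)) * (r * a⁻¹ ^ st.2) -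
       (δ * (r * r * (B * Y * Y).re)) * (r * a⁻¹ ^ st.1) * (r * a⁻¹ ^ st.2))) =
      2 * δ * (B * (S * (((1 - a⁻¹ ^ 2 : ℝ) : ℂ) * Y))).re -
       (ℓ + 1) * δ * a⁻¹ ^ ℓ * (B * ((((1 - a⁻¹ ^ 2 : ℝ) : ℂ) * Y) * (((1 - a⁻¹ ^ 2 : ℝ) : ℂ) * Y))).re := by
    have e1 : (B * ((((1 - a⁻¹ ^ 2 : ℝ) : ℂ) * Y) * (((1 - a⁻¹ ^ 2 : ℝ) : ℂ) * Y))).re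
        = (r * r) * (r * r) * (B * Y * Y).re := by
      rw [hr2, ← Complex.re_ofReal_mul]; push_cast; ring_nf
    have e2 : (B * (S * (((1 - a⁻¹ ^ 2 : ℝ) : ℂ) * Y))).re = (r * r) *
        ∑ st ∈ Finset.HasAntidiagonal.antidiagonal ℓ, a⁻¹ ^ st.1 * (B * η ^ st.2 * Y).re := by
      have : B * (S * (((1 - a⁻¹ ^ 2 : ℝ) : ℂ) * Y)) = ((1 - a⁻¹ ^ 2 : ℝ) : ℂ) *
          ∑ st ∈ Finset.HasAntidiagonal.antidiagonal ℓ, ((a⁻¹ ^ st.1 : ℝ) : ℂ) * (B * η ^ st.2 * Y) := by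
        have h3 : B * (S * (((1 - a⁻¹ ^ 2 : ℝ) : ℂ) * Y)) =
          ((1 - a⁻¹ ^ 2 : ℝ) : ℂ) * ((B * Y) * S) := by ring
        rw [h3, hS, Finset.mul_sum]
        congr 1
        refine Finset.sum_congr rfl fun st _ => ?_
        push_cast; ring
      rw [this, Complex.re_ofReal_mul, Complex.re_sum, hr2]
      simp only [Complex.re_ofReal_mul]
    have e3 : ∑ st ∈ Finset.HasAntidiagonal.antidiagonal ℓ, a⁻¹ ^ st.1 * (B * η ^ st.2 * Y).re
      = ∑ st ∈ Finset.HasAntidiagonal.antidiagonal ℓ, a⁻¹ ^ st.2 * (B * η ^ st.1 * Y).re := by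
      rw [← Finset.Nat.sum_antidiagonal_swap]; rfl
    have e4 : (ℓ + 1 : ℝ) * δ * a⁻¹ ^ ℓ * ((r * r) * (r * r) * (B * Y * Y).re) =
        ∑ st ∈ Finset.HasAntidiagonal.antidiagonal ℓ, (δ * (r * r * (B * Y * Y).re)) * (r * a⁻¹ ^ st.1) * (r * a⁻¹ ^ st.2) := by
      have : ∀ st ∈ Finset.HasAntidiagonal.antidiagonal ℓ, (δ * (r * r * (B * Y * Y).re)) * (r * a⁻¹ ^ st.1) * (r * a⁻¹ ^ st.2)
        = δ * a⁻¹ ^ ℓ * ((r * r) * (r * r) * (B * Y * Y).re) := by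
        intro st hst
        rw [← Finset.HasAntidiagonal.mem_antidiagonal.1 hst, pow_add]; ring
      rw [Finset.sum_congr rfl this, Finset.sum_const, Finset.Nat.card_antidiagonal]
      simp; ring
    rw [e1, e2, e4, Finset.sum_sub_distrib, Finset.sum_add_distrib]
    congr 1
    rw [mul_assoc 2, two_mul]
    congr 1
    · rw [Finset.mul_sum, Finset.mul_sum]
      exact Finset.sum_congr rfl fun _ _ => by ring
    · rw [e3, Finset.mul_sum, Finset.mul_sum]
      exact Finset.sum_congr rfl fun _ _ => by ring
  rw [key, hYG]
  have k1 : (B * (S * (((Gfun a ξ : ℝ) : ℂ) * (a - ηb)))).re = Gfun a ξ *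
      (a * Real.cos (θ + (-(ℓ : ℝ)) * ξ) - a⁻¹ ^ ℓ * Real.cos (θ + 1 * ξ)) := by
    have h1 : η ^ ℓ = Complex.exp (((-(ℓ : ℝ) * ξ : ℝ) : ℂ) * Complex.I) := by
      rw [hη, ← Complex.exp_nat_mul]; push_cast; ring_nf
    have : B * (S * (((Gfun a ξ : ℝ) : ℂ) * (a - ηb))) = ((Gfun a ξ : ℝ) : ℂ) *
        ((a : ℂ) * (B * η ^ ℓ) - ((a⁻¹ ^ ℓ : ℝ) : ℂ) * (B * ηb)) := by
      push_cast at hSg ⊢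
      linear_combination (B * ((Gfun a ξ : ℝ) : ℂ)) * hSg
    rw [this, Complex.re_ofReal_mul, Complex.sub_re, Complex.re_ofReal_mul, Complex.re_ofReal_mul, h1,
      reB, reB]
  have k2 : (B * ((((Gfun a ξ : ℝ) : ℂ) * (a - ηb)) * (((Gfun a ξ : ℝ) : ℂ) * (a - ηb)))).re =
      Gfun a ξ ^ 2 * (a ^ 2 * Real.cos θ - 2 * a * Real.cos (θ + 1 * ξ) + Real.cos (θ + 2 * ξ)) := by
    have h1 : ηb ^ 2 = Complex.exp (((2 * ξ : ℝ) : ℂ) * Complex.I) := by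
      rw [hηb, ← Complex.exp_nat_mul]; push_cast; ring_nf
    have : B * ((((Gfun a ξ : ℝ) : ℂ) * (a - ηb)) * (((Gfun a ξ : ℝ) : ℂ) * (a - ηb))) =
        ((Gfun a ξ ^ 2 : ℝ) : ℂ) * (((a ^ 2 : ℝ) : ℂ) * B - ((2 * a : ℝ) : ℂ) * (B * ηb) + B * ηb ^ 2) := by
      push_cast; ring
    rw [this, Complex.re_ofReal_mul, Complex.add_re, Complex.sub_re, Complex.re_ofReal_mul,
      Complex.re_ofReal_mul, h1, reB, reB, hB, Complex.exp_ofReal_mul_I_re]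
  rw [k1, k2]
  have hz : a ^ (-(ℓ : ℤ)) = a⁻¹ ^ ℓ := by rw [_root_.zpow_neg, _root_.zpow_natCast, inv_pow]
  have hl : (ℓ : ℝ) + 1 ≠ 0 := by positivity
  have hl' : 1 + (ℓ : ℝ) ≠ 0 := by positivity
  simp only [C1, C2, hz]
  generalize Gfun a ξ = G
  generalize a⁻¹ ^ ℓ = bl
  rw [Real.cos_add θ, Real.cos_add θ, Real.cos_add θ, Real.cos_two_mul, Real.sin_two_mul, one_mul, neg_mul,
    Real.cos_neg, Real.sin_neg, Real.cos_sq']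
  field_simp
  ring

theorem noise_eq (ξ φ : ℝ) (p q : ℕ) (hq : 0 < q) (hξval : ξ = 2 * Real.pi * (p : ℝ) / (q : ℝ))
    (m k x i : ℕ) (h : x + i = m * q + k) :
    cosNoise ξ φ x = (Complex.exp (((2 * Real.pi * (k : ℝ) * (p : ℝ) / (q : ℝ) + φ : ℝ) : ℂ) * Complex.I) *
      Complex.exp (((-ξ : ℝ) : ℂ) * Complex.I) ^ i).re := by
  have h1 : Complex.exp (((-ξ : ℝ) : ℂ) * Complex.I) ^ i =
      Complex.exp (((-(i : ℝ) * ξ : ℝ) : ℂ) * Complex.I) := by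
    rw [← Complex.exp_nat_mul]; push_cast; ring_nf
  rw [h1, reB, cosNoise]
  have hx : (x : ℝ) = m * q + k - i := by
    have : ((x + i : ℕ) : ℝ) = ((m * q + k : ℕ) : ℝ) := by rw [h]
    push_cast at this; linarith
  have hq0 : (q : ℝ) ≠ 0 := by positivity
  have : ξ * x + φ = 2 * Real.pi * k * p / q + φ + -(i : ℝ) * ξ + ((p * m : ℕ) : ℝ) * (2 * Real.pi) := by
    rw [hx, hξval]; push_cast; field_simp; ring
  rw [this, Real.cos_add_nat_mul_two_pi]

theorem poly_exp (a δ : ℝ) (ha : 1 < a) :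
    Tendsto (fun n : ℕ => (|δ| * ((n + 1 : ℕ) : ℝ) + 1) ^ 2 / a ^ n) atTop (nhds 0) := by
  have h1 := tendsto_pow_const_div_const_pow_of_one_lt 0 ha
  have h2 := tendsto_pow_const_div_const_pow_of_one_lt 1 ha
  have h3 := tendsto_pow_const_div_const_pow_of_one_lt 2 ha
  have := ((h3.const_mul (|δ| ^ 2)).add (h2.const_mul (2 * |δ| * (|δ| + 1)))).add
    (h1.const_mul ((|δ| + 1) ^ 2))
  simp only [mul_zero, add_zero] at this
  refine this.congr fun n => ?_
  push_cast
  ring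

theorem main_lim (a ξ φ : ℝ) (ha : 1 < a) (δ : ℝ) (B η : ℂ) (hη : ‖η‖ = 1)
    (L K n : ℕ → ℕ) (hL : Tendsto L atTop atTop) (hK : Tendsto K atTop atTop)
    (hn : Tendsto n atTop atTop)
    (hLK : ∀ᶠ m in atTop, 1 < L m ∧ 1 < K m ∧ L m + K m = n m + 2)
    (hnoise : ∀ m x i, x + i = n m → cosNoise ξ φ x = (B * η ^ i).re)
    (u : ∀ m, Fin (L m) → ℝ)
    (hu : ∀ᶠ m in atTop, IsTopEigenvector (HdeltaSq a ξ φ δ (L m) (K m)) (u m)) (ℓ : ℕ) :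
    Tendsto (fun m => recErr a ξ φ δ (L m) (K m) (u m) (n m - ℓ)) atTop
      (nhds ((∑ st ∈ Finset.HasAntidiagonal.antidiagonal ℓ,
      ((√(1 - a⁻¹ ^ 2) * a⁻¹ ^ st.1) * (δ * (√(1 - a⁻¹ ^ 2) * (B * η ^ st.2 *
            (1 - ((a⁻¹ : ℝ) : ℂ) * η)⁻¹).re)) +
       (δ * (√(1 - a⁻¹ ^ 2) * (B * η ^ st.1 * (1 - ((a⁻¹ : ℝ) : ℂ) * η)⁻¹).re)) *
          (√(1 - a⁻¹ ^ 2) * a⁻¹ ^ st.2) -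
       (δ * (√(1 - a⁻¹ ^ 2) * √(1 - a⁻¹ ^ 2) * (B * (1 - ((a⁻¹ : ℝ) : ℂ) * η)⁻¹ *
            (1 - ((a⁻¹ : ℝ) : ℂ) * η)⁻¹).re)) *
          (√(1 - a⁻¹ ^ 2) * a⁻¹ ^ st.1) * (√(1 - a⁻¹ ^ 2) * a⁻¹ ^ st.2))) / ((ℓ : ℝ) + 1))) := by
  let F : ∀ m, Matrix (Fin (L m)) (Fin (K m)) ℝ := fun m => δ • hankelOf (cosNoise ξ φ) (L m) (K m)
  let A : ∀ m, Matrix (Fin (L m)) (Fin (K m)) ℝ := fun m => hankelOf (expSignal a) (L m) (K m) + F m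
  let T : ℕ → ℝ := fun m => nrm a (L m) * nrm a (K m)
  let e : ℕ → ℝ := fun m => |δ| * ((n m + 1 : ℕ) : ℝ) + 1
  have ha0 : 0 < a := by linarith
  have he : ∀ m, 1 ≤ e m := fun m => by
    have : 0 ≤ |δ| * ((n m + 1 : ℕ) : ℝ) := by positivity
    simp only [e]; linarith
  have hTge : ∀ᶠ m in atTop, a ^ n m ≤ T m := by
    filter_upwards [hLK] with m ⟨h1, h2, h3⟩
    have e1 := nrm_ge ha (by omega : 0 < L m)
    have e2 := nrm_ge ha (by omega : 0 < K m)
    calc a ^ n m = a ^ (L m - 1) * a ^ (K m - 1) := by rw [← pow_add]; congr 1; omega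
      _ ≤ _ := mul_le_mul e1 e2 (by positivity) (nrm_pos ha (by omega)).le
  have hT : Tendsto T atTop atTop :=
    tendsto_atTop_mono' _ hTge ((tendsto_pow_atTop_atTop_of_one_lt ha).comp hn)
  have heT : Tendsto (fun m => e m ^ 2 / T m) atTop (nhds 0) := by
    refine squeeze_zero' ?_ ?_ ((poly_exp a δ ha).comp hn)
    · filter_upwards [hT.eventually_gt_atTop 0] with m hm
      positivity
    · filter_upwards [hTge] with m hm
      simp only [Function.comp, e]
      gcongr
  have heT2 : ∀ᶠ m in atTop, 2 * e m < T m := by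
    filter_upwards [heT.eventually (gt_mem_nhds (show (0:ℝ) < 1 / 2 by norm_num)),
      hT.eventually_gt_atTop 0] with m h1 h2
    rw [div_lt_iff₀ h2] at h1
    nlinarith [he m]
  have hpert : ∀ m, ∃ c p μ d : ℝ, ∃ g : Fin (L m) → ℝ, ∃ k : Fin (K m) → ℝ,
      ((1 < L m ∧ 1 < K m ∧ L m + K m = n m + 2) → 2 * e m < T m →
        IsTopEigenvector (HdeltaSq a ξ φ δ (L m) (K m)) (u m) →
      T m ^ 2 - 2 * T m * e m ≤ μ ∧ μ ≤ (T m + e m) ^ 2 ∧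
      (∀ i, u m i = p * ww a (L m) i + T m * c / μ * (F m *ᵥ ww a (K m)) i + g i) ∧
      (∀ j, ((A m)ᵀ *ᵥ u m) j = T m * c * ww a (K m) j + p * ((F m)ᵀ *ᵥ ww a (L m)) j + k j) ∧
      (∀ i, |g i| ≤ e m ^ 2 / μ) ∧ (∀ j, |k j| ≤ T m * e m ^ 2 / μ + e m ^ 3 / μ) ∧
      |c| ≤ 1 ∧ |c ^ 2 - 1| ≤ e m ^ 2 / μ ∧
      c = p + T m * c / μ * (ww a (L m) ⬝ᵥ (F m *ᵥ ww a (K m))) + d ∧ |d| ≤ e m ^ 2 / μ) := by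
    intro m
    by_cases hh : ((1 < L m ∧ 1 < K m ∧ L m + K m = n m + 2) ∧ 2 * e m < T m ∧
        IsTopEigenvector (HdeltaSq a ξ φ δ (L m) (K m)) (u m))
    · obtain ⟨⟨h1, h2, h3⟩, h4, h5⟩ := hh
      obtain ⟨c, p, μ, d, g, k, H⟩ := pert (A m) (F m) (ww a (L m)) (ww a (K m)) (u m) (T m) (e m)
        (by linarith [he m]) h4 (by
          simp only [A, T]; rw [Hdecomp ha (by omega) (by omega)])
        (nsq_ww ha (by omega)) (nsq_ww ha (by omega)) (by
          have := frob (ξ := ξ) (φ := φ) (δ := δ) (L := L m) (K := K m) (by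
            rw [h3]
            have : L m ≤ n m + 1 := by omega
            have h' : K m ≤ n m + 1 := by omega
            calc L m * K m ≤ (n m + 1) * (n m + 1) := Nat.mul_le_mul this h'
              _ = (n m + 2 - 1) ^ 2 := by rw [sq]; rfl)
          rw [h3] at this
          exact this) h5
      exact ⟨c, p, μ, d, g, k, fun _ _ _ => H⟩
    · exact ⟨0, 0, 0, 0, 0, 0, fun x y z => absurd ⟨x, y, z⟩ hh⟩
  choose c p μ d g k H using hpert
  have hall : ∀ᶠ m in atTop, (1 < L m ∧ 1 < K m ∧ L m + K m = n m + 2) ∧ 2 * e m < T m ∧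
        IsTopEigenvector (HdeltaSq a ξ φ δ (L m) (K m)) (u m) := by
    filter_upwards [hLK, heT2, hu] with m h1 h2 h3 using ⟨h1, h2, h3⟩
  have hrL := (S2_lim ha).comp hL
  have hrK := (S2_lim ha).comp hK
  have hZL := (Z_lim ha hη).comp hL
  have hZK := (Z_lim ha hη).comp hK
  have hre : ∀ {f : ℕ → ℂ} {x : ℂ}, Tendsto f atTop (nhds x) →
      Tendsto (fun m => (f m).re) atTop (nhds x.re) := fun h => (Complex.continuous_re.tendsto _).comp h
  have hκ : Tendsto (fun m => ww a (L m) ⬝ᵥ (F m *ᵥ ww a (K m))) atTop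
      (nhds (δ * (√(1 - a⁻¹ ^ 2) * √(1 - a⁻¹ ^ 2) * (B * (1 - ((a⁻¹ : ℝ) : ℂ) * η)⁻¹ *
            (1 - ((a⁻¹ : ℝ) : ℂ) * η)⁻¹).re))) := by
    refine (((hrL.mul hrK).mul (hre ((hZK.const_mul B).mul hZL))).const_mul δ).congr' ?_
    filter_upwards [hLK] with m ⟨h1, h2, h3⟩
    exact (Fκ ha (fun x i hxi => hnoise m x i (by omega))).symm
  have hst : ∀ s t, s + t = ℓ → Tendsto (fun m => bk (u m) s * bk ((A m)ᵀ *ᵥ u m) t -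
      T m * bk (ww a (L m)) s * bk (ww a (K m)) t) atTop (nhds
      ((√(1 - a⁻¹ ^ 2) * a⁻¹ ^ s) * (δ * (√(1 - a⁻¹ ^ 2) * (B * η ^ t *
            (1 - ((a⁻¹ : ℝ) : ℂ) * η)⁻¹).re)) +
       (δ * (√(1 - a⁻¹ ^ 2) * (B * η ^ s * (1 - ((a⁻¹ : ℝ) : ℂ) * η)⁻¹).re)) *
          (√(1 - a⁻¹ ^ 2) * a⁻¹ ^ t) -
       (δ * (√(1 - a⁻¹ ^ 2) * √(1 - a⁻¹ ^ 2) * (B * (1 - ((a⁻¹ : ℝ) : ℂ) * η)⁻¹ *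
            (1 - ((a⁻¹ : ℝ) : ℂ) * η)⁻¹).re)) *
          (√(1 - a⁻¹ ^ 2) * a⁻¹ ^ s) * (√(1 - a⁻¹ ^ 2) * a⁻¹ ^ t))) := by
    intro s t _
    have hsL := hL.eventually_gt_atTop s
    have htK := hK.eventually_gt_atTop t
    refine scal T e c p μ d _ _ _ _ (fun m => bk ((F m)ᵀ *ᵥ ww a (L m)) t)
      (fun m => bk (F m *ᵥ ww a (K m)) s) (fun m => bk (g m) s) (fun m => bk (k m) t) _ _ _ _ _ _
      hT he heT ?_ ?_ ?_ ?_ ?_ ?_ ?_ ?_ ?_ ?_ ?_ ?_ ?_ ?_ hκ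
    · filter_upwards [hall] with m ⟨h1, h2, h3⟩ using (H m h1 h2 h3).1
    · filter_upwards [hall] with m ⟨h1, h2, h3⟩ using (H m h1 h2 h3).2.1
    · filter_upwards [hall, hsL] with m ⟨h1, h2, h3⟩ hs
      simp only [bk_of_lt _ hs]
      exact (H m h1 h2 h3).2.2.1 _
    · filter_upwards [hall, htK] with m ⟨h1, h2, h3⟩ hs
      simp only [bk_of_lt _ hs]
      exact (H m h1 h2 h3).2.2.2.1 _
    · filter_upwards [hall, hsL] with m ⟨h1, h2, h3⟩ hs
      simp only [bk_of_lt _ hs]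
      exact (H m h1 h2 h3).2.2.2.2.1 _
    · filter_upwards [hall, htK] with m ⟨h1, h2, h3⟩ hs
      simp only [bk_of_lt _ hs]
      exact (H m h1 h2 h3).2.2.2.2.2.1 _
    · filter_upwards [hall] with m ⟨h1, h2, h3⟩ using (H m h1 h2 h3).2.2.2.2.2.2.1
    · filter_upwards [hall] with m ⟨h1, h2, h3⟩ using (H m h1 h2 h3).2.2.2.2.2.2.2.1
    · filter_upwards [hall] with m ⟨h1, h2, h3⟩ using (H m h1 h2 h3).2.2.2.2.2.2.2.2.1
    · filter_upwards [hall] with m ⟨h1, h2, h3⟩ using (H m h1 h2 h3).2.2.2.2.2.2.2.2.2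
    · refine (hrL.mul_const (a⁻¹ ^ s)).congr' ?_
      filter_upwards [hsL] with m hs
      rw [bk_of_lt _ hs, ww_rev ha]; rfl
    · refine (hrK.mul_const (a⁻¹ ^ t)).congr' ?_
      filter_upwards [htK] with m hs
      rw [bk_of_lt _ hs, ww_rev ha]; rfl
    · refine ((hrL.mul (hre (hZL.const_mul (B * η ^ t)))).const_mul δ).congr' ?_
      filter_upwards [htK, hLK] with m hs ⟨h1, h2, h3⟩
      rw [bk_of_lt _ hs]
      exact (Fx ha (fun x i hxi => hnoise m x i (by omega)) ⟨t, hs⟩).symm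
    · refine ((hrK.mul (hre (hZK.const_mul (B * η ^ s)))).const_mul δ).congr' ?_
      filter_upwards [hsL, hLK] with m hs ⟨h1, h2, h3⟩
      rw [bk_of_lt _ hs]
      exact (Fy ha (fun x i hxi => hnoise m x i (by omega)) ⟨s, hs⟩).symm
  have hsum := (tendsto_finsetSum (Finset.HasAntidiagonal.antidiagonal ℓ) (fun st hmem =>
    hst st.1 st.2 (Finset.HasAntidiagonal.mem_antidiagonal.1 hmem))).div_const ((ℓ : ℝ) + 1)
  refine hsum.congr' ?_
  filter_upwards [hLK, hL.eventually_gt_atTop ℓ, hK.eventually_gt_atTop ℓ,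
    hn.eventually_gt_atTop ℓ] with m ⟨h1, h2, h3⟩ h4 h5 h6
  have hmat : vecMulVec (u m) (u m) * (hankelOf (expSignal a) (L m) (K m) +
      δ • hankelOf (cosNoise ξ φ) (L m) (K m)) = vecMulVec (u m) ((A m)ᵀ *ᵥ u m) := by
    rw [vecMulVec_mul, mulVec_transpose]
  rw [recErr, hmat, hank_eq _ _ h4 h5 (by omega), Finset.sum_sub_distrib, sub_div]
  congr 1
  have hl : (ℓ : ℝ) + 1 ≠ 0 := by positivity
  rw [div_eq_iff hl]
  have : ∀ st ∈ Finset.HasAntidiagonal.antidiagonal ℓ,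
      T m * bk (ww a (L m)) st.1 * bk (ww a (K m)) st.2 = a ^ (n m - ℓ) := by
    intro st hmem
    have hm := Finset.HasAntidiagonal.mem_antidiagonal.1 hmem
    have q1 : st.1 < L m := by omega
    have q2 : st.2 < K m := by omega
    have e1 := nrm_pos ha (by omega : 0 < L m)
    have e2 := nrm_pos ha (by omega : 0 < K m)
    rw [bk_of_lt _ q1, bk_of_lt _ q2]
    simp only [ww, Wvec, Pi.smul_apply, smul_eq_mul, T]
    have : n m - ℓ = (Fin.rev ⟨st.1, q1⟩ : Fin (L m)) + (Fin.rev ⟨st.2, q2⟩ : Fin (K m)) := by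
      rw [Fin.val_rev, Fin.val_rev]; simp only; omega
    rw [this, pow_add]
    field_simp
  rw [Finset.sum_congr rfl this, Finset.sum_const, Finset.Nat.card_antidiagonal]
  simp; ring

/-- for rational frequency `ω = p/q`, along the subsequence
`N_m = mq + k + 1` the last reconstruction errors converge. -/
theorem stmt_4 (a ξ φ α : ℝ) (ha : 1 < a) (hξ : ξ ∈ Set.Ioo 0 Real.pi)
    (hφ : φ ∈ Set.Ico 0 (2 * Real.pi)) (hα : α ∈ Set.Ioo (0 : ℝ) 1)
    (L K : ℕ → ℕ)
    (hLK : ∀ N, 3 ≤ N → 1 < L N ∧ L N ≤ K N ∧ L N + K N = N + 1)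
    (hlim : Tendsto (fun N : ℕ => (L N : ℝ) / (N : ℝ)) atTop (nhds α))
    (p q : ℕ) (hp : 0 < p) (hq : 0 < q) (hcop : Nat.Coprime p q) (hpq : 2 * p < q)
    (hξval : ξ = 2 * Real.pi * (p : ℝ) / (q : ℝ))
    (δ : ℝ) (ℓ : ℕ) (k : ℕ) (hk : k < q)
    (u : ∀ N : ℕ, Fin (L N) → ℝ)
    (hu : ∀ N, 3 ≤ N → IsTopEigenvector (HdeltaSq a ξ φ δ (L N) (K N)) (u N)) :
    Tendsto (fun m : ℕ =>
        recErr a ξ φ δ (L (m * q + k + 1)) (K (m * q + k + 1)) (u (m * q + k + 1))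
          (m * q + k + 1 - 1 - ℓ))
      atTop
      (nhds (δ * Gfun a ξ *
        (C1 a ξ ℓ * Real.cos (2 * Real.pi * (k : ℝ) * (p : ℝ) / (q : ℝ) + φ) +
         C2 a ξ ℓ * Real.sin (2 * Real.pi * (k : ℝ) * (p : ℝ) / (q : ℝ) + φ)))) := by
  have hNm : Tendsto (fun m : ℕ => m * q + k + 1) atTop atTop := by
    refine tendsto_atTop_mono (fun m => ?_) tendsto_id
    have : m * 1 ≤ m * q := Nat.mul_le_mul_left _ hq
    simp only [id]; omega
  have hLt : Tendsto L atTop atTop := by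
    rw [← tendsto_natCast_atTop_iff (R := ℝ)]
    refine (hlim.pos_mul_atTop hα.1 tendsto_natCast_atTop_atTop).congr' ?_
    filter_upwards [eventually_gt_atTop 0] with N hN
    have : (N : ℝ) ≠ 0 := by positivity
    field_simp
  have hKt : Tendsto K atTop atTop := by
    refine tendsto_atTop_mono' _ ?_ hLt
    filter_upwards [eventually_ge_atTop 3] with N hN using (hLK N hN).2.1
  have hn : Tendsto (fun m : ℕ => m * q + k) atTop atTop := by
    refine tendsto_atTop_mono (fun m => ?_) tendsto_id
    have : m * 1 ≤ m * q := Nat.mul_le_mul_left _ hq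
    simp only [id]; omega
  rw [← final_id a ξ _ δ ha ℓ]
  have := main_lim a ξ φ ha δ
    (Complex.exp (((2 * Real.pi * (k : ℝ) * (p : ℝ) / (q : ℝ) + φ : ℝ) : ℂ) * Complex.I))
    (Complex.exp (((-ξ : ℝ) : ℂ) * Complex.I)) (Complex.norm_exp_ofReal_mul_I _)
    (fun m => L (m * q + k + 1)) (fun m => K (m * q + k + 1)) (fun m => m * q + k)
    (hLt.comp hNm) (hKt.comp hNm) hn (by
      filter_upwards [hNm.eventually_ge_atTop 3] with m hm
      obtain ⟨h1, h2, h3⟩ := hLK _ hm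
      exact ⟨h1, by omega, by omega⟩)
    (fun m x i h => noise_eq ξ φ p q hq hξval m k x i h)
    (fun m => u (m * q + k + 1)) (by
      filter_upwards [hNm.eventually_ge_atTop 3] with m hm using hu _ hm) ℓ
  exact this
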